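/- Let A = S/I be the homogeneous coordinate ring of the degree-n rational normal (Veronese) curve in ℙⁿ, where I ⊆ S is the ideal generated by the quadrics xᵢxⱼ − x_k x_m for all indices 0 ≤ i, j, k, m ≤ n with i + j = k + m. Then for every p ≥ 1 the ℂ-vector space Tor_p^S(A, ℂ) is finite-dimensional of dimension p · C(n, p+1) (the binomial coefficient); in particular Tor_p^S(A, ℂ) = 0 for p ≥ n. -/

import Mathlib

/-!
The variables form a regular sequence in `S`, so the Koszul complex of `X_0, …, X_n` over `S`
resolves `ℂ`, and `Tor_p(A, ℂ)` is its homology with coefficients in `A`. A variable that is a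
nonzerodivisor on the coefficients may be dropped, at the price of dividing the coefficients by it.

The parametrisation `X_i ↦ s tⁱ` identifies `A` with the semigroup ring of the pairs `(d, j)` with
`j ≤ n d`, and the ideals `I`, `(I, X_0)` and `(I, X_0, X_n)` consist of the polynomials whose
coefficients vanish at certain exponents. It follows that `X_0` and then `X_n` may be dropped, and
that `M = S / (I, X_0, X_n)` has the basis `1, X_1, …, X_{n-1}`, with a maximal ideal of square
zero. In the Koszul complex of `X_1, …, X_{n-1}` with coefficients in `M`, the cycles of positive
degree are the elements with coefficients in the maximal ideal. Counting dimensions, the homology of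
degree `p` has dimension `r C(r+1, p+1) - (r+1) C(r, p+1) = p C(n, p+1)`, where `r = n - 1`.
-/

open CategoryTheory MvPolynomial

noncomputable section

/-- The polynomial ring `S = ℂ[x₀, …, xₙ]` in `n + 1` variables. -/
abbrev Spoly (n : ℕ) : Type := MvPolynomial (Fin (n + 1)) ℂ

/-- The ideal of the degree-`n` rational normal (Veronese) curve in `ℙⁿ`, generated by
the quadrics `xᵢxⱼ − x_k x_m` for all indices with `i + j = k + m`. -/
abbrev veroneseIdeal (n : ℕ) : Ideal (Spoly n) :=
  Ideal.span {f : Spoly n | ∃ i j k m : Fin (n + 1),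
    (i : ℕ) + (j : ℕ) = (k : ℕ) + (m : ℕ) ∧ f = X i * X j - X k * X m}

/-- The homogeneous coordinate ring `A = S / I` of the rational normal curve of degree `n`. -/
abbrev Aalg (n : ℕ) : Type := Spoly n ⧸ veroneseIdeal n

/-- `ℂ` regarded as an `S`-module via the augmentation sending each variable to `0`. -/
def CC (n : ℕ) : Type := ℂ

instance (n : ℕ) : AddCommGroup (CC n) := inferInstanceAs (AddCommGroup ℂ)

noncomputable instance (n : ℕ) : Module (Spoly n) (CC n) :=
  Module.compHom ℂ (MvPolynomial.eval (fun _ : Fin (n + 1) => (0 : ℂ)))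

/-- The `S`-module `Tor_p^S(A, ℂ)`. -/
noncomputable def TorModule (n p : ℕ) : ModuleCat (Spoly n) :=
  ((Tor (ModuleCat.{0} (Spoly n)) p).obj (ModuleCat.of (Spoly n) (Aalg n))).obj
    (ModuleCat.of (Spoly n) (CC n))

/-- The `ℂ`-vector space structure on `Tor_p^S(A, ℂ)`, obtained by restriction of scalars
along `ℂ → S`. -/
noncomputable instance (n p : ℕ) : Module ℂ (TorModule n p) :=
  Module.compHom (TorModule n p) (algebraMap ℂ (Spoly n))

/-! ### Koszul complexes -/

/-- The index set of a basis of the Koszul complex of `l` in homological degree `p - 1`: the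
sublists of `l` of length `p - 1`, split according to whether they contain the head of `l`.
Because of the shift by one, truncated subtraction gives the right (empty) index set in
homological degree `-1`, and the differential lowers `p + 1` to `p` definitionally. -/
def KoszulIndex {α : Type*} : List α → ℕ → Type
  | [], p => PLift (p = 1)
  | _ :: l, p => KoszulIndex l p ⊕ KoszulIndex l (p - 1)

namespace KoszulIndex

variable {α : Type*}

instance fintype : (l : List α) → (p : ℕ) → Fintype (KoszulIndex l p)
  | [], p => inferInstanceAs (Fintype (PLift (p = 1)))
  | _ :: l, p =>
    have := fintype l
    inferInstanceAs (Fintype (KoszulIndex l p ⊕ KoszulIndex l (p - 1)))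

instance isEmpty_zero : (l : List α) → IsEmpty (KoszulIndex l 0)
  | [] => ⟨fun i => absurd i.down zero_ne_one⟩
  | _ :: l =>
    have := isEmpty_zero l
    inferInstanceAs (IsEmpty (KoszulIndex l 0 ⊕ KoszulIndex l 0))

instance uniqueOne : (l : List α) → Unique (KoszulIndex l 1)
  | [] => ⟨⟨⟨rfl⟩⟩, fun _ => rfl⟩
  | _ :: l =>
    have := uniqueOne l
    ⟨⟨.inl default⟩, Sum.rec (fun i => congrArg Sum.inl (Unique.eq_default i))
      fun i => (isEmpty_zero l).elim i⟩

theorem card (l : List α) (p : ℕ) :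
    Fintype.card (KoszulIndex l (p + 1)) = l.length.choose p := by
  induction l generalizing p with
  | nil =>
    cases p with
    | zero => exact Fintype.card_unique (α := KoszulIndex ([] : List α) 1)
    | succ p => exact Fintype.card_eq_zero_iff.2 ⟨fun i => by simpa using i.down⟩
  | cons x l ih =>
    refine (Fintype.card_sum (α := KoszulIndex l (p + 1)) (β := KoszulIndex l p)).trans ?_
    cases p with
    | zero => simp
    | succ p => rw [ih, ih, List.length_cons, Nat.choose_succ_succ, add_comm]

end KoszulIndex

/-- The term of homological degree `p - 1` of the Koszul complex of `l` with coefficients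
in `M`. -/
abbrev Koszul {R : Type*} (l : List R) (M : Type*) (p : ℕ) : Type _ := KoszulIndex l p → M

namespace Koszul

variable {R : Type*} [CommRing R] {M N : Type*} [AddCommGroup M] [Module R M]
  [AddCommGroup N] [Module R N]

/-- The `p`-th term of the Koszul complex of `x :: l`, as a term of the mapping cone of
multiplication by `x` on the complex of `l`. -/
def consEquiv (x : R) (l : List R) (M : Type*) [AddCommGroup M] [Module R M] (p : ℕ) :
    (Koszul l M p × Koszul l M (p - 1)) ≃ₗ[R] Koszul (x :: l) M p :=
  (LinearEquiv.sumArrowLequivProdArrow _ _ R M).symm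

theorem compLeft_consEquiv (f : M →ₗ[R] N) (x : R) (l : List R) (p : ℕ)
    (a : Koszul l M p) (b : Koszul l M (p - 1)) :
    f.compLeft _ (consEquiv x l M p (a, b)) =
      consEquiv x l N p (f.compLeft _ a, f.compLeft _ b) :=
  Sum.comp_elim f a b

/-- The Koszul differential: the one of a mapping cone for `x :: l`, and zero for the empty
list, whose complex is concentrated in one degree. -/
def d : (l : List R) → (p : ℕ) → Koszul l M p →ₗ[R] Koszul l M (p - 1)
  | [], _ => 0
  | x :: l, p =>
    (consEquiv x l M (p - 1)).toLinearMap ∘ₗ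
      (((d l p).coprod (x • LinearMap.id)).prod (-(d l (p - 1) ∘ₗ LinearMap.snd R _ _))) ∘ₗ
        (consEquiv x l M p).symm.toLinearMap

theorem d_cons (x : R) (l : List R) (p : ℕ) (a : Koszul l M p) (b : Koszul l M (p - 1)) :
    d (x :: l) p (consEquiv x l M p (a, b)) =
      consEquiv x l M (p - 1) (d l p a + x • b, -d l (p - 1) b) := rfl

theorem d_d (l : List R) (p : ℕ) (z : Koszul l M p) : d l (p - 1) (d l p z) = 0 := by
  induction l generalizing p with
  | nil => rfl
  | cons x l ih =>
    obtain ⟨⟨a, b⟩, rfl⟩ := (consEquiv x l M p).surjective z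
    simp only [d_cons, ih, map_add, map_smul, map_neg, smul_neg, neg_zero, zero_add,
      add_neg_cancel, Prod.mk_zero_zero, map_zero]

theorem d_compLeft (f : M →ₗ[R] N) (l : List R) (p : ℕ) (z : Koszul l M p) :
    d l p (f.compLeft _ z) = f.compLeft _ (d l p z) := by
  induction l generalizing p with
  | nil => exact (map_zero (f.compLeft _)).symm
  | cons x l ih =>
    obtain ⟨⟨a, b⟩, rfl⟩ := (consEquiv x l M p).surjective z
    simp only [d_cons, compLeft_consEquiv, ih, map_add, map_smul, map_neg]

theorem d_cons_eq_zero_iff {x : R} {l : List R} {p : ℕ} {a : Koszul l M p}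
    {b : Koszul l M (p - 1)} :
    d (x :: l) p (consEquiv x l M p (a, b)) = 0 ↔ d l p a + x • b = 0 ∧ d l (p - 1) b = 0 := by
  rw [d_cons, LinearEquiv.map_eq_zero_iff, Prod.mk_eq_zero, neg_eq_zero]

/-- The homology of the Koszul complex of `l` with coefficients in `M`, in homological
degree `p`. -/
abbrev Homology (l : List R) (M : Type*) [AddCommGroup M] [Module R M] (p : ℕ) : Type _ :=
  LinearMap.ker (d (M := M) l (p + 1)) ⧸
    (LinearMap.range (d (M := M) l (p + 2))).submoduleOf (LinearMap.ker (d (M := M) l (p + 1)))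

section Reduction

variable {x : R} {q : M →ₗ[R] N}

theorem compLeft_exact {ι : Type*} (hq : Function.Exact (LinearMap.lsmul R M x) q) :
    Function.Exact (LinearMap.lsmul R (ι → M) x) (q.compLeft ι) := fun z => by
  constructor
  · intro hz
    choose y hy using fun i => (hq (z i)).1 (congrFun hz i)
    exact ⟨y, funext hy⟩
  · rintro ⟨y, rfl⟩
    exact funext fun i => hq.apply_apply_eq_zero (y i)

/-- The chain map which kills the summand of the cone of `x` lying over the basis elements
involving `x`. -/
def reduce (x : R) (l : List R) (q : M →ₗ[R] N) (p : ℕ) :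
    Koszul (x :: l) M p →ₗ[R] Koszul l N p :=
  q.compLeft _ ∘ₗ LinearMap.fst R _ _ ∘ₗ (consEquiv x l M p).symm.toLinearMap

theorem reduce_consEquiv (x : R) (l : List R) (q : M →ₗ[R] N) (p : ℕ) (a : Koszul l M p)
    (b : Koszul l M (p - 1)) : reduce x l q p (consEquiv x l M p (a, b)) = q.compLeft _ a := rfl

theorem reduce_d (hq : Function.Exact (LinearMap.lsmul R M x) q) (l : List R) (p : ℕ)
    (z : Koszul (x :: l) M p) :
    reduce x l q (p - 1) (d (x :: l) p z) = d l p (reduce x l q p z) := by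
  obtain ⟨⟨a, b⟩, rfl⟩ := (consEquiv x l M p).surjective z
  rw [d_cons, reduce_consEquiv, reduce_consEquiv, d_compLeft, map_add, add_eq_left]
  exact (compLeft_exact hq).apply_apply_eq_zero b

theorem exists_d_eq_zero_and_reduce_eq (hx : IsSMulRegular M x)
    (hq : Function.Exact (LinearMap.lsmul R M x) q) (hs : Function.Surjective q) (l : List R)
    {p : ℕ} {w : Koszul l N p} (hw : d l p w = 0) :
    ∃ z : Koszul (x :: l) M p, d (x :: l) p z = 0 ∧ reduce x l q p z = w := by
  obtain ⟨a, rfl⟩ : ∃ a, q.compLeft _ a = w := hs.comp_left w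
  rw [d_compLeft] at hw
  obtain ⟨b, hb : x • b = d l p a⟩ := (compLeft_exact hq _).1 hw
  refine ⟨consEquiv x l M p (a, -b), d_cons_eq_zero_iff.2 ⟨?_, ?_⟩, rfl⟩
  · rw [smul_neg, hb, add_neg_cancel]
  · apply (IsSMulRegular.pi fun _ => hx).right_eq_zero_of_smul
    rw [← map_smul, smul_neg, hb, map_neg, d_d, neg_zero]

theorem exists_d_eq_of_reduce_eq_d (hx : IsSMulRegular M x)
    (hq : Function.Exact (LinearMap.lsmul R M x) q) (hs : Function.Surjective q) {l : List R}
    {p : ℕ} {z : Koszul (x :: l) M p} (hz : d (x :: l) p z = 0) {w : Koszul l N (p + 1)}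
    (hw : reduce x l q p z = d l (p + 1) w) :
    ∃ y, d (x :: l) (p + 1) y = z := by
  obtain ⟨⟨a, b⟩, rfl⟩ := (consEquiv x l M p).surjective z
  obtain ⟨hab, -⟩ := d_cons_eq_zero_iff.1 hz
  obtain ⟨c, rfl⟩ : ∃ c, q.compLeft _ c = w := hs.comp_left w
  obtain ⟨y, hy⟩ : ∃ y : Koszul l M p, y = d l (p + 1) c := ⟨_, rfl⟩
  have hdy : d l p y = 0 := hy ▸ d_d l (p + 1) c
  have hay : q.compLeft _ (a - y) = 0 := by
    rw [map_sub, sub_eq_zero, hy]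
    exact hw.trans (d_compLeft q l (p + 1) c)
  obtain ⟨e, he : x • e = a - y⟩ := (compLeft_exact hq _).1 hay
  have heb : d l p e + b = 0 := by
    apply (IsSMulRegular.pi fun _ => hx).right_eq_zero_of_smul
    rw [smul_add, ← map_smul, he, map_sub, hdy, sub_zero, hab]
  refine ⟨consEquiv x l M (p + 1) (c, e), (d_cons x l (p + 1) c e).trans ?_⟩
  exact congrArg (consEquiv x l M p)
    (Prod.ext (by rw [he, ← hy]; exact add_sub_cancel y a) (neg_eq_of_add_eq_zero_right heb))

theorem nonempty_homology_cons_equiv (hx : IsSMulRegular M x)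
    (hq : Function.Exact (LinearMap.lsmul R M x) q) (hs : Function.Surjective q) (l : List R)
    (p : ℕ) : Nonempty (Homology (x :: l) M p ≃ₗ[R] Homology l N p) := by
  let φ : LinearMap.ker (d (M := M) (x :: l) (p + 1)) →ₗ[R]
      LinearMap.ker (d (M := N) l (p + 1)) :=
    (reduce x l q (p + 1)).restrict fun z (hz : _ = 0) =>
      (reduce_d hq l (p + 1) z).symm.trans (by rw [hz, map_zero])
  let ψ : LinearMap.ker (d (M := M) (x :: l) (p + 1)) →ₗ[R] Homology l N p :=
    Submodule.mkQ _ ∘ₗ φ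
  have hψ : Function.Surjective ψ := by
    refine (Submodule.mkQ_surjective _).comp ?_
    rintro ⟨w, hw⟩
    obtain ⟨z, hz, e⟩ := exists_d_eq_zero_and_reduce_eq hx hq hs l hw
    exact ⟨⟨z, hz⟩, Subtype.ext e⟩
  have hker : LinearMap.ker ψ = (LinearMap.range (d (M := M) (x :: l) (p + 2))).submoduleOf
      (LinearMap.ker (d (M := M) (x :: l) (p + 1))) := by
    ext ⟨z, hz⟩
    rw [LinearMap.mem_ker, LinearMap.comp_apply, Submodule.mkQ_apply,
      Submodule.Quotient.mk_eq_zero]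
    constructor
    · rintro ⟨w, hw⟩
      exact exists_d_eq_of_reduce_eq_d hx hq hs hz hw.symm
    · rintro ⟨y, rfl⟩
      exact ⟨reduce x l q (p + 2) y, (reduce_d hq l (p + 2) y).symm⟩
  exact ⟨(Submodule.quotEquivOfEq _ _ hker.symm).trans (ψ.quotKerEquivOfSurjective hψ)⟩

theorem nonempty_homology_cons_equiv_quotSMulTop (hx : IsSMulRegular M x) (l : List R) (p : ℕ) :
    Nonempty (Homology (x :: l) M p ≃ₗ[R] Homology l (QuotSMulTop x M) p) :=
  nonempty_homology_cons_equiv hx (LinearMap.exact_lsmul_mkQ_smul_top M x)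
    (Submodule.mkQ_surjective _) l p

theorem exact_lsmul_factor {I J : Ideal R} (hIJ : I ≤ J) (hJ : J = I ⊔ Ideal.span {x}) :
    Function.Exact (LinearMap.lsmul R (R ⧸ I) x) (Submodule.factor hIJ) := by
  intro m
  obtain ⟨f, rfl⟩ := Ideal.Quotient.mk_surjective m
  have hf : f ∈ J ↔ ∃ g, f - x * g ∈ I := by
    simp_rw [hJ, sup_comm I, Ideal.mem_span_singleton_sup, mul_comm x]
    constructor
    · rintro ⟨g, h, hh, rfl⟩
      exact ⟨g, by rwa [add_sub_cancel_left]⟩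
    · rintro ⟨g, hg⟩
      exact ⟨g, _, hg, add_sub_cancel _ _⟩
  refine (Ideal.Quotient.eq_zero_iff_mem.trans hf).trans ⟨?_, ?_⟩
  · rintro ⟨g, hg⟩
    exact ⟨Ideal.Quotient.mk I g, (Ideal.Quotient.eq.2 hg).symm⟩
  · rintro ⟨m, hm⟩
    obtain ⟨g, rfl⟩ := Ideal.Quotient.mk_surjective m
    exact ⟨g, Ideal.Quotient.eq.1 hm.symm⟩

theorem nonempty_homology_cons_quotient_equiv {I J : Ideal R} (hJ : J = I ⊔ Ideal.span {x})
    (hx : ∀ f, x * f ∈ I → f ∈ I) (l : List R) (p : ℕ) :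
    Nonempty (Homology (x :: l) (R ⧸ I) p ≃ₗ[R] Homology l (R ⧸ J) p) :=
  have hIJ : I ≤ J := hJ ▸ le_sup_left
  nonempty_homology_cons_equiv ((isSMulRegular_quotient_iff_mem_of_smul_mem I x).2 hx)
    (exact_lsmul_factor hIJ hJ) (Submodule.factor_surjective hIJ) l p

end Reduction

theorem d_apply_mem_ofList_smul_top (l : List R) (p : ℕ) (z : Koszul l M p)
    (i : KoszulIndex l (p - 1)) : d l p z i ∈ Ideal.ofList l • (⊤ : Submodule R M) := by
  induction l generalizing p with
  | nil => exact zero_mem _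
  | cons x l ih =>
    obtain ⟨⟨a, b⟩, rfl⟩ := (consEquiv x l M p).surjective z
    rw [Ideal.ofList_cons_smul, d_cons]
    rcases i with i | i
    · refine add_mem (Submodule.mem_sup_right (ih p a i)) (Submodule.mem_sup_left ?_)
      exact Submodule.smul_mem_pointwise_smul _ x _ Submodule.mem_top
    · exact Submodule.mem_sup_right (neg_mem (ih (p - 1) b i))

/-- The identification of the term of homological degree `0` with the coefficients. -/
def oneEquiv (l : List R) (M : Type*) [AddCommGroup M] [Module R M] : Koszul l M 1 ≃ₗ[R] M :=
  LinearEquiv.funUnique (KoszulIndex l 1) R M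

theorem range_oneEquiv_comp_d (l : List R) :
    LinearMap.range ((oneEquiv l M).toLinearMap ∘ₗ d l 2) = Ideal.ofList l • ⊤ := by
  apply le_antisymm
  · rintro _ ⟨z, rfl⟩
    exact d_apply_mem_ofList_smul_top l 2 z _
  induction l with
  | nil => simp
  | cons x l ih =>
    rw [Ideal.ofList_cons_smul, sup_le_iff]
    constructor
    · rintro _ ⟨m, -, rfl⟩
      refine ⟨consEquiv x l M 2 (0, (oneEquiv l M).symm m), ?_⟩
      change oneEquiv l M ((d l 2 0 : Koszul l M 1) + x • (oneEquiv l M).symm m) = x • m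
      rw [map_add, map_smul, LinearEquiv.apply_symm_apply, map_zero, map_zero, zero_add]
    · refine ih.trans ?_
      rintro _ ⟨a, rfl⟩
      refine ⟨consEquiv x l M 2 (a, 0), ?_⟩
      change oneEquiv l M ((d l 2 a : Koszul l M 1) + x • (0 : Koszul l M 1)) = _
      rw [smul_zero, add_zero]
      rfl

open RingTheory.Sequence in
theorem subsingleton_homology_succ {l : List R} (hl : IsWeaklyRegular M l) (p : ℕ) :
    Subsingleton (Homology l M (p + 1)) := by
  induction l generalizing M with
  | nil =>
    have : IsEmpty (KoszulIndex ([] : List R) (p + 2)) := ⟨fun i => by simpa using i.down⟩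
    infer_instance
  | cons x l ih =>
    obtain ⟨hx, hl⟩ := (isWeaklyRegular_cons_iff M x l).1 hl
    have := ih hl
    exact (nonempty_homology_cons_equiv_quotSMulTop hx l (p + 1)).some.subsingleton

theorem exists_d_eq_of_d_eq_zero {l : List R} (hl : RingTheory.Sequence.IsWeaklyRegular M l)
    {p : ℕ} {z : Koszul l M (p + 2)} (hz : d l (p + 2) z = 0) : ∃ w, d l (p + 3) w = z := by
  have := subsingleton_homology_succ hl p
  have hmem := (Submodule.Quotient.mk_eq_zero _).1
    (Subsingleton.elim (Submodule.Quotient.mk ⟨z, hz⟩ : Homology l M (p + 1)) 0)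
  exact hmem

section SquareZero

variable {l : List R} {K : Submodule R M}

theorem d_eq_zero_of_forall_mem (hK : ∀ x ∈ l, ∀ m ∈ K, x • m = 0) {p : ℕ} {z : Koszul l M p}
    (hz : ∀ i, z i ∈ K) : d l p z = 0 := by
  induction l generalizing p with
  | nil => rfl
  | cons x l ih =>
    obtain ⟨⟨a, b⟩, rfl⟩ := (consEquiv x l M p).surjective z
    rw [List.forall_mem_cons] at hK
    have ha : d l p a = 0 := ih hK.2 fun i => hz (.inl i)
    have hb : d l (p - 1) b = 0 := ih hK.2 fun i => hz (.inr i)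
    have hxb : x • b = 0 := funext fun i => hK.1 _ (hz (.inr i))
    exact d_cons_eq_zero_iff.2 ⟨by rw [ha, hxb, add_zero], hb⟩

theorem forall_mem_of_d_eq_zero (hK : ∀ x ∈ l, ∀ m ∈ K, x • m = 0)
    (hl : ∀ x l', (x :: l') <:+ l → ∀ m, x • m ∈ Ideal.ofList l' • (⊤ : Submodule R M) → m ∈ K)
    {p : ℕ} {z : Koszul l M (p + 2)} (hz : d l (p + 2) z = 0) (i : KoszulIndex l (p + 2)) :
    z i ∈ K := by
  induction l generalizing p with
  | nil => exact absurd i.down (by simp)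
  | cons x l ih =>
    obtain ⟨⟨a, b⟩, rfl⟩ := (consEquiv x l M (p + 2)).surjective z
    rw [List.forall_mem_cons] at hK
    have hab := (d_cons_eq_zero_iff.1 hz).1
    have hb : ∀ i, b i ∈ K := fun i => by
      refine hl x l List.suffix_rfl _ ?_
      have hi : x • b i = -d l (p + 2) a i :=
        congrFun (eq_neg_of_add_eq_zero_right hab : x • b = -d l (p + 2) a) i
      exact hi ▸ neg_mem (d_apply_mem_ofList_smul_top l (p + 2) a i)
    have hxb : x • b = 0 := funext fun i => hK.1 _ (hb i)
    rw [hxb, add_zero] at hab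
    rcases i with i | i
    · exact ih hK.2 (fun y l' h => hl y l' (h.trans (List.suffix_cons x l))) hab i
    · exact hb i

end SquareZero

section Dimension

open Module

theorem finrank_koszulIndex_fun (k : Type*) [Field k] {α : Type*} (l : List α) (p : ℕ)
    (V : Type*) [AddCommGroup V] [Module k V]
    [Module.Finite k V] :
    finrank k (KoszulIndex l (p + 1) → V) = l.length.choose p * finrank k V := by
  rw [finrank_pi_fintype, Finset.sum_const, Finset.card_univ, KoszulIndex.card, smul_eq_mul]

variable (k : Type*) [Field k] [Algebra k R] [Module k M] [IsScalarTower k R M]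
  [Module.Finite k M]

theorem finite_submodule (Z : Submodule R M) : Module.Finite k Z :=
  inferInstanceAs (Module.Finite k (Z.restrictScalars k))

theorem finite_homology (l : List R) (p : ℕ) : Module.Finite k (Homology l M p) :=
  have := finite_submodule k (LinearMap.ker (d (M := M) l (p + 1)))
  Module.Finite.quotient k _

theorem finrank_quotient_submoduleOf_add_finrank {B Z : Submodule R M} (h : B ≤ Z) :
    finrank k (Z ⧸ B.submoduleOf Z) + finrank k B = finrank k Z := by
  have := finite_submodule k Z
  rw [← ((Submodule.submoduleOfEquivOfLe h).restrictScalars k).finrank_eq,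
    ← (Submodule.Quotient.restrictScalarsEquiv k (B.submoduleOf Z)).finrank_eq]
  exact Submodule.finrank_quotient_add_finrank ((B.submoduleOf Z).restrictScalars k)

variable {l : List R} {K : Submodule R M}

theorem finrank_ker_d (hK : ∀ x ∈ l, ∀ m ∈ K, x • m = 0)
    (hl : ∀ x l', (x :: l') <:+ l → ∀ m, x • m ∈ Ideal.ofList l' • (⊤ : Submodule R M) → m ∈ K)
    (p : ℕ) : finrank k (LinearMap.ker (d (M := M) l (p + 2))) =
      l.length.choose (p + 1) * finrank k K := by
  have hker : LinearMap.ker (d (M := M) l (p + 2)) = LinearMap.range (K.subtype.compLeft _) := by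
    ext z
    refine ⟨fun hz => ⟨fun i => ⟨z i, forall_mem_of_d_eq_zero hK hl hz i⟩, rfl⟩, ?_⟩
    rintro ⟨y, rfl⟩
    exact d_eq_zero_of_forall_mem hK fun i => (y i).2
  have hinj : Function.Injective (K.subtype.compLeft (KoszulIndex l (p + 2))) :=
    K.injective_subtype.comp_left
  have := finite_submodule k K
  rw [hker, ← ((LinearEquiv.ofInjective _ hinj).restrictScalars k).finrank_eq]
  exact finrank_koszulIndex_fun k l (p + 1) K

theorem finrank_homology_add (hK : ∀ x ∈ l, ∀ m ∈ K, x • m = 0)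
    (hl : ∀ x l', (x :: l') <:+ l → ∀ m, x • m ∈ Ideal.ofList l' • (⊤ : Submodule R M) → m ∈ K)
    (p : ℕ) : finrank k (Homology l M (p + 1)) + l.length.choose (p + 2) * finrank k M =
      (l.length + 1).choose (p + 2) * finrank k K := by
  have hle : LinearMap.range (d (M := M) l (p + 3)) ≤ LinearMap.ker (d (M := M) l (p + 2)) := by
    rintro _ ⟨z, rfl⟩
    exact d_d l (p + 3) z
  have hH : finrank k (Homology l M (p + 1)) + finrank k (LinearMap.range (d (M := M) l (p + 3))) =
      l.length.choose (p + 1) * finrank k K :=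
    (finrank_quotient_submoduleOf_add_finrank k hle).trans (finrank_ker_d k hK hl p)
  have hd : finrank k (LinearMap.range (d (M := M) l (p + 3))) +
      l.length.choose (p + 2) * finrank k K =
      l.length.choose (p + 2) * finrank k M := by
    rw [← finrank_ker_d k hK hl (p + 1), ← finrank_koszulIndex_fun k l (p + 2) M]
    exact ((d (M := M) l (p + 3)).restrictScalars k).finrank_range_add_finrank_ker
  rw [Nat.choose_succ_succ, add_mul]
  linarith

end Dimension

section Tor

universe u

variable {R : Type u} [CommRing R] {N : Type u} [AddCommGroup N] [Module R N]

/-- The Koszul complex of `l` with coefficients in `M`, with the index shift of `Koszul` undone. -/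
def complex (l : List R) (M : Type u) [AddCommGroup M] [Module R M] :
    ChainComplex (ModuleCat.{u} R) ℕ :=
  ChainComplex.of (fun p => ModuleCat.of R (Koszul l M (p + 1)))
    (fun p => ModuleCat.ofHom (d l (p + 2)))
    (fun p => ModuleCat.hom_ext (LinearMap.ext (d_d l (p + 3))))

theorem complex_d (l : List R) (M : Type u) [AddCommGroup M] [Module R M] (p : ℕ) :
    (complex l M).d (p + 1) p = ModuleCat.ofHom (d l (p + 2)) :=
  ChainComplex.of_d (fun p => ModuleCat.of R (Koszul l M (p + 1)))
    (fun p => ModuleCat.ofHom (d l (p + 2))) p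

theorem nonempty_homology_complex_equiv (l : List R) (M : Type u) [AddCommGroup M] [Module R M]
    (p : ℕ) : Nonempty ((complex l M).homology (p + 1) ≃ₗ[R] Homology l M (p + 1)) := by
  let S : ShortComplex (ModuleCat.{u} R) := .mk
    (ModuleCat.ofHom (d (M := M) l (p + 3))) (ModuleCat.ofHom (d (M := M) l (p + 2)))
    (ModuleCat.hom_ext (LinearMap.ext (d_d l (p + 3))))
  let e : (complex l M).sc' (p + 2) (p + 1) p ≅ S :=
    ShortComplex.isoMk (Iso.refl _) (Iso.refl _) (Iso.refl _)
      ((Category.id_comp _).trans ((complex_d l M (p + 1)).symm.trans (Category.comp_id _).symm))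
      ((Category.id_comp _).trans ((complex_d l M p).symm.trans (Category.comp_id _).symm))
  let e' : (S.moduleCatLeftHomologyData.H : Type u) ≃ₗ[R] Homology l M (p + 1) :=
    Submodule.quotEquivOfEq _ _ <| Submodule.ext fun z =>
      ⟨fun ⟨w, hw⟩ => ⟨w, congrArg Subtype.val hw⟩, fun ⟨w, hw⟩ => ⟨w, Subtype.ext hw⟩⟩
  exact ⟨((complex l M).homologyIsoSc' (p + 2) (p + 1) p (by simp) (by simp) ≪≫
    ShortComplex.homologyMapIso e ≪≫ S.moduleCatHomologyIso).toLinearEquiv.trans e'⟩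

open Classical MonoidalCategory in
/-- Tensoring the Koszul complex of `l` over `R` with `M` gives the one with coefficients in `M`. -/
def tensorComplexIso (l : List R) (M : Type u) [AddCommGroup M] [Module R M] :
    (((tensoringLeft (ModuleCat.{u} R)).obj (ModuleCat.of R M)).mapHomologicalComplex
      (ComplexShape.down ℕ)).obj (complex l R) ≅ complex l M :=
  HomologicalComplex.Hom.isoOfComponents
    (fun p => (TensorProduct.piScalarRight R R M (KoszulIndex l (p + 1))).toModuleIso) <| by
    rintro _ p rfl
    change _ = (ModuleCat.of R M ◁ (complex l R).d (p + 1) p) ≫ _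
    rw [complex_d, complex_d]
    refine ModuleCat.hom_ext (TensorProduct.ext' fun m z => ?_)
    exact d_compLeft (LinearMap.toSpanSingleton R M m) l (p + 2) z

theorem range_d_two_eq_ker (l : List R) {f : R →ₗ[R] N} (hf : LinearMap.ker f = Ideal.ofList l) :
    LinearMap.range (d (M := R) l 2) = LinearMap.ker (f ∘ₗ (oneEquiv l R).toLinearMap) := by
  have h := range_oneEquiv_comp_d (M := R) l
  rw [smul_eq_mul, Ideal.mul_top, LinearMap.range_comp] at h
  rw [LinearMap.ker_comp, hf, ← h]
  exact (Submodule.comap_map_eq_of_injective (oneEquiv l R).injective _).symm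

/-- The augmentation of the Koszul complex of `l` over `R`, as a chain map to `N` placed in
degree `0`. -/
def toSingle₀ (l : List R) (f : R →ₗ[R] N) (hf : LinearMap.ker f = Ideal.ofList l) :
    complex l R ⟶ (ChainComplex.single₀ (ModuleCat.{u} R)).obj (ModuleCat.of R N) :=
  (ChainComplex.toSingle₀Equiv _ _).symm
    ⟨ModuleCat.ofHom (f ∘ₗ (oneEquiv l R).toLinearMap), by
      rw [complex_d]
      exact ModuleCat.hom_ext (LinearMap.range_le_ker_iff.1 (range_d_two_eq_ker l hf).le)⟩

theorem toSingle₀_f_zero (l : List R) (f : R →ₗ[R] N) (hf : LinearMap.ker f = Ideal.ofList l) :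
    (toSingle₀ l f hf).f 0 = ModuleCat.ofHom (f ∘ₗ (oneEquiv l R).toLinearMap) :=
  ChainComplex.toSingle₀Equiv_symm_apply_f_zero _ _

theorem quasiIso_toSingle₀ {l : List R} (hl : RingTheory.Sequence.IsWeaklyRegular R l)
    {f : R →ₗ[R] N} (hf : LinearMap.ker f = Ideal.ofList l) (hs : Function.Surjective f) :
    QuasiIso (toSingle₀ l f hf) where
  quasiIsoAt p := by
    cases p with
    | zero =>
      rw [ChainComplex.quasiIsoAt₀_iff, ShortComplex.quasiIso_iff_of_zeros' _ rfl rfl rfl]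
      constructor
      · rw [ShortComplex.moduleCat_exact_iff]
        intro z (hz : (toSingle₀ l f hf).f 0 z = 0)
        rw [toSingle₀_f_zero] at hz
        obtain ⟨w, hw⟩ := (range_d_two_eq_ker l hf).ge hz
        exact ⟨w, (congrArg (fun g => g.hom w) (complex_d l R 0)).trans hw⟩
      · change Epi ((toSingle₀ l f hf).f 0)
        rw [toSingle₀_f_zero]
        exact (ModuleCat.epi_iff_surjective (ModuleCat.ofHom (f ∘ₗ (oneEquiv l R).toLinearMap))).2
          (hs.comp (oneEquiv l R).surjective)
    | succ p =>
      rw [quasiIsoAt_iff_exactAt' (hL := ChainComplex.exactAt_succ_single_obj ..),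
        HomologicalComplex.exactAt_iff' _ (p + 2) (p + 1) p (by simp) (by simp),
        ShortComplex.moduleCat_exact_iff]
      intro z (hz : (complex l R).d (p + 1) p z = 0)
      rw [complex_d] at hz
      obtain ⟨w, hw⟩ := exists_d_eq_of_d_eq_zero hl hz
      exact ⟨w, (congrArg (fun g => g.hom w) (complex_d l R (p + 1))).trans hw⟩

/-- The Koszul resolution of the quotient of `R` by a weakly regular sequence `l`. -/
def projectiveResolution {l : List R} (hl : RingTheory.Sequence.IsWeaklyRegular R l)
    {f : R →ₗ[R] N} (hf : LinearMap.ker f = Ideal.ofList l) (hs : Function.Surjective f) :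
    ProjectiveResolution (ModuleCat.of R N) where
  complex := complex l R
  projective p := inferInstanceAs (Projective (ModuleCat.of R (Koszul l R (p + 1))))
  π := toSingle₀ l f hf
  quasiIso := quasiIso_toSingle₀ hl hf hs

open MonoidalCategory in
theorem nonempty_tor_equiv_homology {l : List R} (hl : RingTheory.Sequence.IsWeaklyRegular R l)
    {f : R →ₗ[R] N} (hf : LinearMap.ker f = Ideal.ofList l) (hs : Function.Surjective f)
    (M : Type u) [AddCommGroup M] [Module R M] (p : ℕ) :
    Nonempty (((Tor (ModuleCat.{u} R) (p + 1)).obj (ModuleCat.of R M)).obj (ModuleCat.of R N)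
      ≃ₗ[R] Homology l M (p + 1)) :=
  have ⟨e⟩ := nonempty_homology_complex_equiv l M p
  ⟨((projectiveResolution hl hf hs).isoLeftDerivedObj
      ((tensoringLeft (ModuleCat.{u} R)).obj (ModuleCat.of R M)) (p + 1) ≪≫
    (HomologicalComplex.homologyFunctor _ _ (p + 1)).mapIso
      (tensorComplexIso l M)).toLinearEquiv.trans e⟩

end Tor

end Koszul

/-! ### The variables of a polynomial ring -/

theorem mem_span_X_of_X_mul_mem {σ k : Type*} [CommRing k] {U : Set σ} {i : σ} (hi : i ∉ U)
    {s : MvPolynomial σ k} (h : X i * s ∈ Ideal.span (X '' U : Set (MvPolynomial σ k))) :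
    s ∈ Ideal.span (X '' U : Set (MvPolynomial σ k)) := by
  classical
  rw [mem_ideal_span_X_image] at h ⊢
  intro m hm
  obtain ⟨j, hj, hne⟩ := h (Finsupp.single i 1 + m) (by
    rw [mem_support_iff, coeff_X_mul]
    exact mem_support_iff.1 hm)
  have hij : i ≠ j := fun e => hi (e ▸ hj)
  rw [Finsupp.add_apply, Finsupp.single_eq_of_ne hij.symm, zero_add] at hne
  exact ⟨j, hj, hne⟩

theorem ofList_map_X {σ k : Type*} [CommRing k] (L : List σ) :
    Ideal.ofList (L.map (X : σ → MvPolynomial σ k)) = Ideal.span (X '' {i | i ∈ L}) :=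
  congrArg Ideal.span (Set.ext fun _ => List.mem_map)

theorem isWeaklyRegular_map_X {σ : Type*} (k : Type*) [CommRing k] {L : List σ} (hL : L.Nodup) :
    RingTheory.Sequence.IsWeaklyRegular (MvPolynomial σ k)
      (L.map (X : σ → MvPolynomial σ k)) where
  regular_mod_prev a ha := by
    rw [List.length_map] at ha
    refine (isSMulRegular_quotient_iff_mem_of_smul_mem _ _).2 fun s hs => ?_
    rw [← List.map_take, ofList_map_X, smul_eq_mul, Ideal.mul_top] at hs ⊢
    rw [List.getElem_map, smul_eq_mul] at hs
    refine mem_span_X_of_X_mul_mem (fun hmem => ?_) hs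
    obtain ⟨b, hb, hab⟩ := List.mem_take_iff_getElem.1 hmem
    have := (hL.getElem_inj_iff).1 hab
    omega

section Augmentation

variable {n : ℕ}

/-- The augmentation `S → ℂ`. -/
def augCC (n : ℕ) : Spoly n →ₗ[Spoly n] CC n where
  toFun s := eval (fun _ => (0 : ℂ)) s
  map_add' := map_add _
  map_smul' a b := RingHom.map_mul (eval fun _ : Fin (n + 1) => (0 : ℂ)) a b

theorem augCC_surjective (n : ℕ) : Function.Surjective (augCC n) :=
  fun c => ⟨C (c : ℂ), eval_C (R := ℂ) c⟩

theorem ker_augCC_eq_ofList {L : List (Fin (n + 1))} (hL : ∀ i, i ∈ L) :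
    LinearMap.ker (augCC n) = Ideal.ofList (L.map X) := by
  ext s
  have haug : augCC n s = coeff 0 s := by
    rw [← constantCoeff_eq, ← eval_zero']
    rfl
  rw [LinearMap.mem_ker, haug, ofList_map_X, mem_ideal_span_X_image]
  constructor
  · intro h m hm
    by_contra! hne
    obtain rfl : m = 0 := Finsupp.ext fun i => hne i (hL i)
    exact mem_support_iff.1 hm h
  · intro h
    by_contra hne
    obtain ⟨i, -, hi⟩ := h 0 (mem_support_iff.2 hne)
    exact hi rfl

end Augmentation

/-! ### The parametrisation of the rational normal curve -/

namespace Veronese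

variable {n : ℕ}

/-- The semigroup of the exponents `(d, j)` of the monomials `s ^ d * t ^ j` in the image of the
parametrisation `X i ↦ s * t ^ i` of the affine cone over the rational normal curve. -/
def cone (n : ℕ) : AddSubmonoid (ℕ × ℕ) where
  carrier := {e | e.2 ≤ n * e.1}
  zero_mem' := Nat.zero_le _
  add_mem' {e e'} h h' := by
    change e.2 + e'.2 ≤ n * (e.1 + e'.1)
    exact (add_le_add h h').trans_eq (mul_add ..).symm

theorem mem_cone {e : ℕ × ℕ} : e ∈ cone n ↔ e.2 ≤ n * e.1 :=
  Iff.rfl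

/-- The generator of the semigroup `cone n` that is the exponent of `s * t ^ i`. -/
def gen (i : Fin (n + 1)) : cone n := ⟨(1, i), mem_cone.2 (i.is_le.trans_eq (mul_one n).symm)⟩

/-- The parametrisation `X i ↦ s * t ^ i`, with values in the semigroup ring of `cone n`. -/
def param (n : ℕ) : Spoly n →ₐ[ℂ] AddMonoidAlgebra ℂ (cone n) :=
  aeval fun i => .single (gen i) 1

theorem param_X (i : Fin (n + 1)) : param n (X i) = .single (gen i) 1 :=
  aeval_X _ i

/-- The monomial of degree `d` that is mapped to `s ^ d * t ^ j` by the parametrisation and contains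
one variable other than `X_0` and `X_n` at most. For `j > n * d` it is a junk value. -/
def normalForm (n : ℕ) : ℕ → ℕ → Spoly n
  | 0, _ => 1
  | d + 1, j => X ⟨min j n, Nat.lt_succ_of_le (min_le_right j n)⟩ * normalForm n d (j - n)

theorem param_normalForm {d j : ℕ} (h : (d, j) ∈ cone n) :
    param n (normalForm n d j) = .single ⟨(d, j), h⟩ 1 := by
  induction d generalizing j with
  | zero =>
    obtain rfl : j = 0 := by simpa [mem_cone] using h
    exact map_one _
  | succ d ih =>
    have hd : (d, j - n) ∈ cone n := by
      rw [mem_cone, mul_add_one] at h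
      exact Nat.sub_le_iff_le_add.2 h
    rw [normalForm, map_mul, param_X, ih hd, AddMonoidAlgebra.single_mul_single, one_mul]
    congr 1
    ext
    · exact add_comm 1 d
    · change min j n + (j - n) = j
      omega

theorem X_mul_normalForm_sub_mem (i : Fin (n + 1)) {d j : ℕ} (h : j ≤ n * d) :
    X i * normalForm n d j - normalForm n (d + 1) (i + j) ∈ veroneseIdeal n := by
  have hi := i.is_le
  induction d generalizing i j with
  | zero =>
    obtain rfl : j = 0 := by simpa using h
    have hX : normalForm n 1 i = X i :=
      (mul_one _).trans (congrArg X (Fin.ext (min_eq_left hi)))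
    rw [add_zero, hX, normalForm, mul_one, sub_self]
    exact zero_mem _
  | succ d ih =>
    have hd : j - n ≤ n * d := Nat.sub_le_iff_le_add.2 (h.trans_eq (mul_add_one n d))
    let m : Fin (n + 1) := ⟨min j n, by omega⟩
    let a : Fin (n + 1) := ⟨min (i + j) n, by omega⟩
    let b : Fin (n + 1) := ⟨i + min j n - min (i + j) n, by omega⟩
    have hexch : (X i * X m - X a * X b : Spoly n) ∈ veroneseIdeal n :=
      Ideal.subset_span ⟨i, m, a, b, by simp only [m, a, b]; omega, rfl⟩
    have hb : (b : ℕ) + (j - n) = i + j - n := by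
      simp only [b]
      omega
    have hrec := ih b hd b.is_le
    rw [hb] at hrec
    have hsplit : X i * normalForm n (d + 1) j - normalForm n (d + 2) (i + j) =
        normalForm n d (j - n) * (X i * X m - X a * X b) +
          X a * (X b * normalForm n d (j - n) - normalForm n (d + 1) (i + j - n)) := by
      change X i * (X m * _) - X a * _ = _
      ring
    rw [hsplit]
    exact add_mem (Ideal.mul_mem_left _ _ hexch) (Ideal.mul_mem_left _ _ hrec)

/-- The linear section of the parametrisation given by the normal forms. -/
def lift (n : ℕ) : AddMonoidAlgebra ℂ (cone n) →ₗ[ℂ] Spoly n :=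
  (AddMonoidAlgebra.basis (cone n) ℂ).constr ℂ fun e => normalForm n e.1.1 e.1.2

theorem lift_single (e : cone n) : lift n (.single e 1) = normalForm n e.1.1 e.1.2 := by
  rw [← AddMonoidAlgebra.basis_apply]
  exact Module.Basis.constr_basis _ _ _ e

theorem param_lift (g : AddMonoidAlgebra ℂ (cone n)) : param n (lift n g) = g := by
  have : (param n).toLinearMap ∘ₗ lift n = LinearMap.id :=
    (AddMonoidAlgebra.basis (cone n) ℂ).ext fun e => by
      rw [AddMonoidAlgebra.basis_apply]
      exact (congrArg (param n) (lift_single e)).trans (param_normalForm e.2)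
  exact LinearMap.congr_fun this g

theorem X_mul_lift_sub_mem (i : Fin (n + 1)) (g : AddMonoidAlgebra ℂ (cone n)) :
    X i * lift n g - lift n (.single (gen i) 1 * g) ∈ veroneseIdeal n := by
  let q : Spoly n →ₗ[ℂ] Aalg n := (veroneseIdeal n).mkQ.restrictScalars ℂ
  have h : q ∘ₗ LinearMap.mulLeft ℂ (X i) ∘ₗ lift n =
      q ∘ₗ lift n ∘ₗ LinearMap.mulLeft ℂ (.single (gen i) 1) :=
    (AddMonoidAlgebra.basis (cone n) ℂ).ext fun e => by
      refine (Submodule.Quotient.eq (veroneseIdeal n)).2 ?_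
      change X i * lift n (.single e 1) - lift n (.single (gen i) 1 * .single e 1) ∈ _
      rw [AddMonoidAlgebra.single_mul_single, one_mul, lift_single, lift_single]
      convert X_mul_normalForm_sub_mem i (mem_cone.1 e.2) using 3
      · exact add_comm 1 _
      · rfl
  exact (Submodule.Quotient.eq _).1 (LinearMap.congr_fun h g)

theorem sub_lift_param_mem (f : Spoly n) : f - lift n (param n f) ∈ veroneseIdeal n := by
  induction f using MvPolynomial.induction_on with
  | C c =>
    have : lift n (param n (C c)) = C c := by
      rw [C_eq_smul_one, map_smul, map_smul, map_one, AddMonoidAlgebra.one_def, lift_single]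
      rfl
    rw [this, sub_self]
    exact zero_mem _
  | add f g hf hg =>
    rw [map_add, map_add, add_sub_add_comm]
    exact add_mem hf hg
  | mul_X f i hf =>
    have h := add_mem (Ideal.mul_mem_left _ (X i) hf) (X_mul_lift_sub_mem i (param n f))
    rwa [mul_sub, sub_add_sub_cancel, ← param_X, ← map_mul, mul_comm] at h

theorem mem_veroneseIdeal_iff {f : Spoly n} : f ∈ veroneseIdeal n ↔ param n f = 0 := by
  constructor
  · suffices h : veroneseIdeal n ≤ RingHom.ker (param n) from fun hf => h hf
    rw [Ideal.span_le]
    rintro _ ⟨i, j, k, m, h, rfl⟩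
    have hgen : gen i + gen j = gen k + gen m := Subtype.ext (Prod.ext rfl h)
    rw [SetLike.mem_coe, RingHom.mem_ker, map_sub, map_mul, map_mul, param_X, param_X, param_X,
      param_X, AddMonoidAlgebra.single_mul_single, AddMonoidAlgebra.single_mul_single, hgen,
      sub_self]
  · intro hf
    have h := sub_lift_param_mem f
    rwa [hf, map_zero, sub_zero] at h

/-- The coefficient of a polynomial at the exponent `e` of the parametrisation. -/
def paramCoeff (e : cone n) : Spoly n →ₗ[ℂ] ℂ :=
  (AddMonoidAlgebra.basis (cone n) ℂ).coord e ∘ₗ (param n).toLinearMap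

theorem paramCoeff_lift (e : cone n) (g : AddMonoidAlgebra ℂ (cone n)) :
    paramCoeff e (lift n g) = g.coeff e :=
  congrArg (fun x => x.coeff e) (param_lift g)

theorem paramCoeff_X_mul (i : Fin (n + 1)) (e : cone n) (f : Spoly n) :
    paramCoeff (gen i + e) (X i * f) = paramCoeff e f := by
  change (param n (X i * f)).coeff (gen i + e) = (param n f).coeff e
  rw [map_mul, param_X, AddMonoidAlgebra.coeff_single_mul_add, one_mul]

theorem paramCoeff_X_mul_of_forall_ne {i : Fin (n + 1)} {e : cone n} (h : ∀ e', e ≠ gen i + e')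
    (f : Spoly n) : paramCoeff e (X i * f) = 0 := by
  change (param n (X i * f)).coeff e = 0
  rw [map_mul, param_X]
  exact AddMonoidAlgebra.coeff_single_mul_of_forall_add_ne _ _ fun e' => (h e').symm

/-- The ideal `J` consists of the polynomials whose coefficients at the exponents in `E` vanish:
the quotient by `J` has the monomials with exponents in `E` as a basis. -/
def IsCutOutBy (J : Ideal (Spoly n)) (E : Set (cone n)) : Prop :=
  ∀ f, f ∈ J ↔ ∀ e ∈ E, paramCoeff e f = 0

theorem isCutOutBy_veroneseIdeal : IsCutOutBy (veroneseIdeal n) Set.univ := fun f => by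
  rw [mem_veroneseIdeal_iff, ← AddMonoidAlgebra.coeff_inj, DFunLike.ext_iff]
  exact ⟨fun h e _ => h e, fun h e => h e trivial⟩

namespace IsCutOutBy

variable {J : Ideal (Spoly n)} {E : Set (cone n)}

theorem mem_of_X_mul_mem (h : IsCutOutBy J E) {i : Fin (n + 1)} (hE : ∀ e ∈ E, gen i + e ∈ E)
    {f : Spoly n} (hf : X i * f ∈ J) : f ∈ J :=
  (h f).2 fun e he => (paramCoeff_X_mul i e f).symm.trans ((h _).1 hf _ (hE e he))

theorem sup_span_X (h : IsCutOutBy J E) (i : Fin (n + 1)) :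
    IsCutOutBy (J ⊔ Ideal.span {X i}) {e ∈ E | ∀ e', e ≠ gen i + e'} := fun f => by
  rw [Submodule.mem_sup]
  constructor
  · rintro ⟨g, hg, _, hX, rfl⟩ e ⟨he, hi⟩
    obtain ⟨f, rfl⟩ := Ideal.mem_span_singleton'.1 hX
    rw [map_add, (h g).1 hg e he, mul_comm, paramCoeff_X_mul_of_forall_ne hi, add_zero]
  · intro hf
    let g : Spoly n := lift n ((param n f).divOf (gen i))
    refine ⟨f - X i * g, (h _).2 fun e he => ?_, X i * g,
      Ideal.mul_mem_right _ _ (Ideal.mem_span_singleton_self _), sub_add_cancel _ _⟩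
    rw [map_sub, sub_eq_zero]
    by_cases hi : ∃ e', e = gen i + e'
    · obtain ⟨e', rfl⟩ := hi
      rw [paramCoeff_X_mul, paramCoeff_lift]
      rfl
    · push Not at hi
      rw [hf e ⟨he, hi⟩, paramCoeff_X_mul_of_forall_ne hi]

theorem sup_ofList_map_X (h : IsCutOutBy J E) (L : List (Fin (n + 1))) :
    IsCutOutBy (J ⊔ Ideal.ofList (L.map X)) {e ∈ E | ∀ i ∈ L, ∀ e', e ≠ gen i + e'} := by
  induction L generalizing J E with
  | nil => simpa using h
  | cons i L ih =>
    rw [List.map_cons, Ideal.ofList_cons, ← sup_assoc]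
    simpa only [Set.mem_ofPred_eq, List.forall_mem_cons, and_assoc] using ih (h.sup_span_X i)

theorem nonempty_quotient_equiv (h : IsCutOutBy J E) (hE : E.Finite) :
    Nonempty ((Spoly n ⧸ J) ≃ₗ[ℂ] (E → ℂ)) := by
  have := hE.to_subtype
  let φ : Spoly n →ₗ[ℂ] E → ℂ := LinearMap.pi fun e => paramCoeff e.1
  have hker : J.restrictScalars ℂ = LinearMap.ker φ := by
    ext f
    rw [Submodule.restrictScalars_mem, h f, LinearMap.mem_ker, funext_iff]
    exact ⟨fun hf e => hf e.1 e.2, fun hf e he => hf ⟨e, he⟩⟩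
  have hφ : Function.Surjective φ := fun v => by
    let g : cone n →₀ ℂ := (Finsupp.equivFunOnFinite.symm v).embDomain (.subtype _)
    refine ⟨lift n (.ofCoeff g), funext fun e => ?_⟩
    exact (paramCoeff_lift _ _).trans (Finsupp.embDomain_apply_self (.subtype _) _ e)
  exact ⟨(Submodule.Quotient.restrictScalarsEquiv ℂ J).symm.trans
    ((Submodule.quotEquivOfEq _ _ hker).trans (φ.quotKerEquivOfSurjective hφ))⟩

theorem finite_quotient (h : IsCutOutBy J E) (hE : E.Finite) :
    Module.Finite ℂ (Spoly n ⧸ J) :=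
  have := hE.to_subtype
  .equiv (h.nonempty_quotient_equiv hE).some.symm

theorem finrank_quotient (h : IsCutOutBy J E) (hE : E.Finite) :
    Module.finrank ℂ (Spoly n ⧸ J) = E.ncard := by
  have := hE.fintype
  rw [(h.nonempty_quotient_equiv hE).some.finrank_eq, Module.finrank_fintype_fun_eq_card,
    ← Nat.card_eq_fintype_card]
  rfl

end IsCutOutBy

theorem gen_injective : Function.Injective (gen (n := n)) := fun _ _ h =>
  Fin.ext (congrArg (fun e => e.1.2) h)

theorem zero_ne_gen_add (i : Fin (n + 1)) (e : cone n) : 0 ≠ gen i + e := fun h => by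
  have : 0 = 1 + e.1.1 := congrArg (fun e => e.1.1) h
  omega

theorem gen_eq_gen_add_iff {i j : Fin (n + 1)} {e : cone n} :
    gen j = gen i + e ↔ j = i ∧ e = 0 := by
  refine ⟨fun h => ?_, fun ⟨h, h'⟩ => by rw [h, h', add_zero]⟩
  have h₁ : 1 = 1 + e.1.1 := congrArg (fun e => e.1.1) h
  have h₂ : (0 : ℕ) = e.1.1 := by omega
  obtain rfl : e = 0 := by
    refine Subtype.ext (Prod.ext h₂.symm ?_)
    have := mem_cone.1 e.2
    rwa [← h₂, mul_zero, nonpos_iff_eq_zero] at this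
  exact ⟨gen_injective (h.trans (add_zero _)), rfl⟩

/-! ### The Artinian reduction -/

/-- The indices of the variables `X_1, …, X_{n-1}`. -/
def interior (n : ℕ) : Finset (Fin (n + 1)) :=
  {0, Fin.last n}ᶜ

theorem mem_interior {i : Fin (n + 1)} : i ∈ interior n ↔ i ≠ 0 ∧ i ≠ Fin.last n := by
  simp [interior]

theorem card_interior (n : ℕ) : (interior (n + 1)).card = n := by
  rw [interior, Finset.card_compl, Finset.card_pair (Fin.last_pos' (n := n + 1)).ne,
    Fintype.card_fin]
  rfl

/-- The ideal `(I, X_0)` of the first step of the reduction. -/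
def firstIdeal (n : ℕ) : Ideal (Spoly n) :=
  veroneseIdeal n ⊔ Ideal.span {X 0}

/-- The ideal `(I, X_0, X_n)`, whose quotient is Artinian. -/
def artinianIdeal (n : ℕ) : Ideal (Spoly n) :=
  firstIdeal n ⊔ Ideal.span {X (Fin.last n)}

theorem isCutOutBy_firstIdeal : IsCutOutBy (firstIdeal n) {e | ∀ e', e ≠ gen 0 + e'} := by
  simpa using! isCutOutBy_veroneseIdeal.sup_span_X (n := n) 0

theorem forall_gen_last_add_ne (hn : 0 < n) {e : cone n} (he : ∀ e', e ≠ gen 0 + e') (e' : cone n) :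
    gen (Fin.last n) + e ≠ gen 0 + e' := fun h => by
  have h₁ : 1 + e.1.1 = 1 + e'.1.1 := congrArg (fun e => e.1.1) h
  have h₂ : n + e.1.2 = 0 + e'.1.2 := congrArg (fun e => e.1.2) h
  have hle := mem_cone.1 e'.2
  rw [← add_left_cancel h₁] at hle
  obtain ⟨d, hd⟩ : ∃ d, e.1.1 = d + 1 := Nat.exists_eq_add_one.2 <| by
    by_contra h₀
    rw [Nat.eq_zero_of_not_pos h₀] at hle
    omega
  rw [hd, mul_add_one] at hle
  refine he ⟨(d, e.1.2), mem_cone.2 (by omega : e.1.2 ≤ n * d)⟩ (Subtype.ext (Prod.ext ?_ ?_))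
  · exact hd.trans (add_comm d 1)
  · exact (zero_add e.1.2).symm

theorem eq_zero_or_mem_interior {e : cone n} (h₀ : ∀ e', e ≠ gen 0 + e')
    (hn : ∀ e', e ≠ gen (Fin.last n) + e') : e = 0 ∨ ∃ i ∈ interior n, gen i = e := by
  obtain ⟨⟨d, j⟩, he⟩ := e
  rw [mem_cone] at he
  cases d with
  | zero => exact .inl (Subtype.ext (Prod.ext rfl (by simpa using he)))
  | succ d =>
    have hj : n * d < j := by
      by_contra! hle
      exact h₀ ⟨(d, j), hle⟩ (Subtype.ext (Prod.ext (add_comm d 1) (zero_add j).symm))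
    have hjn : j < n := by
      by_contra! hle
      refine hn ⟨(d, j - n), ?_⟩ (Subtype.ext (Prod.ext (add_comm d 1) ?_))
      · exact Nat.sub_le_iff_le_add.2 (he.trans_eq (mul_add_one n d))
      · exact (Nat.add_sub_cancel' hle).symm
    obtain rfl : d = 0 := by
      by_contra hd
      exact absurd (Nat.le_mul_of_pos_right n (Nat.pos_of_ne_zero hd)) (by omega)
    refine .inr ⟨⟨j, by omega⟩, mem_interior.2 ⟨?_, ?_⟩, rfl⟩
    · exact fun h => hj.ne' (congrArg Fin.val h)
    · exact fun h => hjn.ne (congrArg Fin.val h)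

theorem isCutOutBy_artinianIdeal :
    IsCutOutBy (artinianIdeal n) (insert 0 (gen '' (interior n))) := by
  have h : {e ∈ {e : cone n | ∀ e', e ≠ gen 0 + e'} | ∀ e', e ≠ gen (Fin.last n) + e'} =
      insert 0 (gen '' (interior n)) := by
    ext e
    refine ⟨fun ⟨h₀, hn⟩ => eq_zero_or_mem_interior h₀ hn, ?_⟩
    rintro (rfl | ⟨i, hi, rfl⟩)
    · exact ⟨zero_ne_gen_add _, zero_ne_gen_add _⟩
    · obtain ⟨h₀, hn⟩ := mem_interior.1 hi
      exact ⟨fun _ h => h₀ (gen_eq_gen_add_iff.1 h).1, fun _ h => hn (gen_eq_gen_add_iff.1 h).1⟩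
  exact h ▸ isCutOutBy_firstIdeal.sup_span_X (Fin.last n)

theorem paramCoeff_zero (f : Spoly n) : paramCoeff 0 f = constantCoeff f := by
  induction f using MvPolynomial.induction_on with
  | C c =>
    have : param n (C c) = .single 0 c := (param n).commutes c
    change (param n (C c)).coeff 0 = _
    rw [this, constantCoeff_C]
    exact Finsupp.single_eq_same
  | add f g hf hg => rw [map_add, map_add, hf, hg]
  | mul_X f i _ =>
    rw [mul_comm, paramCoeff_X_mul_of_forall_ne (zero_ne_gen_add i), map_mul, constantCoeff_X,
      zero_mul]

/-- The ideal `(X_0, …, X_n)`, in the form of a kernel. -/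
abbrev irrelevantIdeal (n : ℕ) : Ideal (Spoly n) :=
  RingHom.ker (constantCoeff : Spoly n →+* ℂ)

theorem isCutOutBy_irrelevantIdeal : IsCutOutBy (irrelevantIdeal n) {0} := fun f => by
  rw [RingHom.mem_ker, ← paramCoeff_zero]
  exact ⟨fun h _ he => he ▸ h, fun h => h 0 rfl⟩

theorem finrank_quotient_artinianIdeal (n : ℕ) :
    Module.finrank ℂ (Spoly (n + 1) ⧸ artinianIdeal (n + 1)) = n + 1 := by
  rw [isCutOutBy_artinianIdeal.finrank_quotient (Set.toFinite _), Set.ncard_insert_of_notMem,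
    Set.ncard_image_of_injective _ gen_injective, Set.ncard_coe_finset, card_interior]
  rintro ⟨i, -, hi⟩
  exact zero_ne_gen_add i 0 (hi.symm.trans (add_zero _).symm)

/-- The maximal ideal of the Artinian reduction. -/
def maximalIdeal (n : ℕ) : Submodule (Spoly n) (Spoly n ⧸ artinianIdeal n) :=
  Submodule.map (artinianIdeal n).mkQ (irrelevantIdeal n)

theorem finrank_maximalIdeal (n : ℕ) : Module.finrank ℂ (maximalIdeal (n + 1)) = n := by
  have hJ := isCutOutBy_artinianIdeal (n := n + 1)
  have hle : artinianIdeal (n + 1) ≤ irrelevantIdeal (n + 1) :=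
    fun f hf => (isCutOutBy_irrelevantIdeal f).2 fun e he => (hJ f).1 hf e (.inl he)
  have := hJ.finite_quotient (Set.toFinite _)
  have h := Submodule.finrank_quotient_add_finrank ((maximalIdeal (n + 1)).restrictScalars ℂ)
  have hres : Module.finrank ℂ (Spoly (n + 1) ⧸ irrelevantIdeal (n + 1)) = 1 :=
    (isCutOutBy_irrelevantIdeal.finrank_quotient (Set.toFinite _)).trans (Set.ncard_singleton 0)
  let e : (_ ⧸ maximalIdeal (n + 1)) ≃ₗ[Spoly (n + 1)] Spoly (n + 1) ⧸ irrelevantIdeal (n + 1) :=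
    Submodule.quotientQuotientEquivQuotient _ _ hle
  rw [finrank_quotient_artinianIdeal,
    (Submodule.Quotient.restrictScalarsEquiv ℂ (maximalIdeal (n + 1))).finrank_eq,
    (e.restrictScalars ℂ).finrank_eq, hres] at h
  exact Nat.add_left_cancel (h.trans (add_comm n 1))

theorem X_smul_eq_zero_of_mem_maximalIdeal (i : Fin (n + 1)) {m : Spoly n ⧸ artinianIdeal n}
    (hm : m ∈ maximalIdeal n) : (X i : Spoly n) • m = 0 := by
  obtain ⟨f, hf, rfl⟩ := hm
  refine (Submodule.Quotient.mk_eq_zero _).2 ((isCutOutBy_artinianIdeal _).2 ?_)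
  rintro e he
  change paramCoeff e (X i * f) = 0
  by_cases h : ∃ e', e = gen i + e'
  · obtain ⟨e', rfl⟩ := h
    rw [paramCoeff_X_mul]
    rcases he with he | ⟨j, -, hj⟩
    · exact absurd he.symm (zero_ne_gen_add i e')
    · rw [(gen_eq_gen_add_iff.1 hj).2]
      exact (isCutOutBy_irrelevantIdeal f).1 hf 0 rfl
  · push Not at h
    exact paramCoeff_X_mul_of_forall_ne h f

theorem mem_maximalIdeal_of_X_smul_mem {i : Fin (n + 1)} (hi : i ∈ interior n)
    {L : List (Fin (n + 1))} (hL : i ∉ L) {m : Spoly n ⧸ artinianIdeal n}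
    (hm : (X i : Spoly n) • m ∈
      Ideal.ofList (L.map (X : _ → Spoly n)) • (⊤ : Submodule (Spoly n) _)) :
    m ∈ maximalIdeal n := by
  obtain ⟨f, rfl⟩ := (artinianIdeal n).mkQ_surjective m
  have hf : X i * f ∈ artinianIdeal n ⊔ Ideal.ofList (L.map X) := by
    rw [← Submodule.comap_map_mkQ, Submodule.mem_comap]
    rwa [← map_smul, ← (artinianIdeal n).range_mkQ, LinearMap.range_eq_map, ← Submodule.map_smul'',
      smul_eq_mul, Ideal.mul_top] at hm
  refine ⟨f, (isCutOutBy_irrelevantIdeal f).2 ?_, rfl⟩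
  rintro _ rfl
  rw [← paramCoeff_X_mul i, add_zero]
  refine (isCutOutBy_artinianIdeal.sup_ofList_map_X L _).1 hf _ ⟨.inr ⟨i, hi, rfl⟩, ?_⟩
  exact fun j hj _ h => hL ((gen_eq_gen_add_iff.1 h).1 ▸ hj)

/-! ### Koszul homology of the coordinate ring -/

theorem mem_veroneseIdeal_of_X_zero_mul_mem (f : Spoly n) (hf : X 0 * f ∈ veroneseIdeal n) :
    f ∈ veroneseIdeal n :=
  isCutOutBy_veroneseIdeal.mem_of_X_mul_mem (fun _ _ => trivial) hf

theorem mem_firstIdeal_of_X_last_mul_mem (hn : 0 < n) (f : Spoly n)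
    (hf : X (Fin.last n) * f ∈ firstIdeal n) : f ∈ firstIdeal n :=
  isCutOutBy_firstIdeal.mem_of_X_mul_mem (fun _ => forall_gen_last_add_ne hn) hf

/-- The list of all variables, the two nonzerodivisors of the reduction first. -/
def indices (n : ℕ) : List (Fin (n + 1)) :=
  0 :: Fin.last n :: (interior n).toList

theorem mem_indices (i : Fin (n + 1)) : i ∈ indices n := by
  simp only [indices, List.mem_cons, Finset.mem_toList, mem_interior]
  tauto

theorem nodup_indices (hn : 0 < n) : (indices n).Nodup := by
  have h : (0 : Fin (n + 1)) ≠ Fin.last n := fun h => hn.ne (congrArg Fin.val h)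
  simp [indices, mem_interior, Finset.nodup_toList, h]

/-- The variables `X_1, …, X_{n-1}`. -/
def interiorVars (n : ℕ) : List (Spoly n) :=
  (interior n).toList.map X

theorem length_interiorVars (n : ℕ) : (interiorVars (n + 1)).length = n := by
  rw [interiorVars, List.length_map, Finset.length_toList, card_interior]

theorem nonempty_torModule_equiv_homology (hn : 0 < n) (p : ℕ) :
    Nonempty (TorModule n (p + 1) ≃ₗ[Spoly n]
      Koszul.Homology (interiorVars n) (Spoly n ⧸ artinianIdeal n) (p + 1)) := by
  obtain ⟨e₁⟩ := Koszul.nonempty_tor_equiv_homology (isWeaklyRegular_map_X ℂ (nodup_indices hn))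
    (ker_augCC_eq_ofList mem_indices) (augCC_surjective n) (Aalg n) p
  obtain ⟨e₂⟩ := Koszul.nonempty_homology_cons_quotient_equiv (J := firstIdeal n) rfl
    mem_veroneseIdeal_of_X_zero_mul_mem (X (Fin.last n) :: interiorVars n) (p + 1)
  obtain ⟨e₃⟩ := Koszul.nonempty_homology_cons_quotient_equiv (J := artinianIdeal n) rfl
    (mem_firstIdeal_of_X_last_mul_mem hn) (interiorVars n) (p + 1)
  exact ⟨(e₁.trans e₂).trans e₃⟩

theorem finite_quotient_artinianIdeal (n : ℕ) : Module.Finite ℂ (Spoly n ⧸ artinianIdeal n) :=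
  isCutOutBy_artinianIdeal.finite_quotient (Set.toFinite _)

theorem smul_eq_zero_of_mem_interiorVars {x : Spoly n} (hx : x ∈ interiorVars n)
    {m : Spoly n ⧸ artinianIdeal n} (hm : m ∈ maximalIdeal n) : x • m = 0 := by
  obtain ⟨i, -, rfl⟩ := List.mem_map.1 hx
  exact X_smul_eq_zero_of_mem_maximalIdeal i hm

theorem mem_maximalIdeal_of_smul_mem {x : Spoly n} {l : List (Spoly n)}
    (hl : (x :: l) <:+ interiorVars n) {m : Spoly n ⧸ artinianIdeal n}
    (hm : x • m ∈ Ideal.ofList l • (⊤ : Submodule (Spoly n) (Spoly n ⧸ artinianIdeal n))) :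
    m ∈ maximalIdeal n := by
  obtain ⟨_, hL, h⟩ := List.suffix_map_iff.1 hl
  obtain ⟨i, L, rfl, rfl, rfl⟩ := List.map_eq_cons_iff.1 h.symm
  have hi : i ∈ interior n := Finset.mem_toList.1 (hL.mem List.mem_cons_self)
  have hiL : i ∉ L := (List.nodup_cons.1 ((interior n).nodup_toList.sublist hL.sublist)).1
  exact mem_maximalIdeal_of_X_smul_mem hi hiL hm

theorem finrank_homology_interiorVars (n p : ℕ) :
    Module.finrank ℂ (Koszul.Homology (interiorVars (n + 1))
      (Spoly (n + 1) ⧸ artinianIdeal (n + 1)) (p + 1)) = (p + 1) * (n + 1).choose (p + 2) := by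
  have := finite_quotient_artinianIdeal (n + 1)
  have h := Koszul.finrank_homology_add ℂ
    (fun x hx m hm => smul_eq_zero_of_mem_interiorVars (n := n + 1) hx hm)
    (fun x l hl m hm => mem_maximalIdeal_of_smul_mem hl hm) p
  have habsorb := Nat.add_one_mul_choose_eq n (p + 1)
  rw [length_interiorVars, finrank_quotient_artinianIdeal, finrank_maximalIdeal] at h
  rw [Nat.choose_succ_succ' n (p + 1)] at h habsorb ⊢
  linarith

theorem finite_and_finrank_torModule (n p : ℕ) :
    FiniteDimensional ℂ (TorModule (n + 1) (p + 1)) ∧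
      Module.finrank ℂ (TorModule (n + 1) (p + 1)) = (p + 1) * (n + 1).choose (p + 2) := by
  obtain ⟨e⟩ := nonempty_torModule_equiv_homology n.succ_pos p
  let e' : TorModule (n + 1) (p + 1) ≃ₗ[ℂ] Koszul.Homology (interiorVars (n + 1))
      (Spoly (n + 1) ⧸ artinianIdeal (n + 1)) (p + 1) :=
    { e with
      map_smul' := fun c z => (e.map_smul (algebraMap ℂ (Spoly (n + 1)) c) z).trans
        (algebraMap_smul (Spoly (n + 1)) c (e z)) }
  have := finite_quotient_artinianIdeal (n + 1)
  have := Koszul.finite_homology ℂ (M := Spoly (n + 1) ⧸ artinianIdeal (n + 1))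
    (interiorVars (n + 1)) (p + 1)
  exact ⟨.equiv e'.symm, e'.finrank_eq.trans (finrank_homology_interiorVars n p)⟩

end Veronese

/-- Syzygies of the rational normal (Veronese) curve of degree `n` in `ℙⁿ`:
for `p ≥ 1`, `Tor_p^S(A, ℂ)` is finite-dimensional over `ℂ` of dimension `p · C(n, p+1)`;
in particular it vanishes for `p ≥ n`. -/
theorem syzygies_veronese_curve (n p : ℕ) (hn : 0 < n) (hp : 1 ≤ p) :
    FiniteDimensional ℂ (TorModule n p) ∧
      Module.finrank ℂ (TorModule n p) = p * Nat.choose n (p + 1) := by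
  obtain ⟨r, rfl⟩ := Nat.exists_eq_add_one.2 hn
  obtain ⟨q, rfl⟩ := Nat.exists_eq_add_one.2 hp
  exact Veronese.finite_and_finrank_torModule r q

end
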